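/- arXiv:1901.06945 — 2 statements merged into one kernel-verified Lean document; each statement's English description precedes it below -/
import Mathlib

section
/- Let e1, …, e8 ∈ E satisfy e_i·e_j = 1 for all i ≠ j. Then (1/3)(e1 + e2 + ⋯ + e8) is an element of Λ. -/
noncomputable section

/-- The standard dot product on ℝ^8. -/
def dot (a b : Fin 8 → ℝ) : ℝ := ∑ i, a i * b i

/-- Membership in the E8 lattice Λ: all coordinates are integers or all lie in ℤ + 1/2,
and the coordinates sum to an even integer. -/
def inLambda (a : Fin 8 → ℝ) : Prop :=
  ((∀ i, ∃ n : ℤ, a i = n) ∨ (∀ i, ∃ n : ℤ, a i = n + 1 / 2)) ∧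
    ∃ n : ℤ, (∑ i, a i) = 2 * n

/-- The E8 root system E: lattice vectors of squared norm 2. -/
def isRoot (a : Fin 8 → ℝ) : Prop := inLambda a ∧ dot a a = 2

/-- The Weyl group W: linear isometries of ℝ^8 mapping the root system E onto itself. -/
def IsWeyl (w : (Fin 8 → ℝ) ≃ₗ[ℝ] (Fin 8 → ℝ)) : Prop :=
  (∀ a b : Fin 8 → ℝ, dot (w a) (w b) = dot a b) ∧
    (⇑w '' {a | isRoot a} = {a | isRoot a})

/-!
If `x = ∑ i, c i • e i` with `e i · e j = 1 + δ_ij` and `S = ∑ i, c i`, then `e i · x = c i + S`.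
When `t = (1/k) ∑ i, e i` and there are `k ^ 2 - 1` vectors, summing over `i` gives `t · x = k S`,
and then `(t · x) ^ 2 + x · x = ∑ i, (e i · x) ^ 2`. So for `x` in an integral lattice whose
pairings with the `e i` are integers, the square of the rational number `t · x` is an integer,
hence `t · x` is an integer: `t` lies in the dual lattice. The E8 lattice is its own dual.
-/

section MemOne

variable {R A : Type*}

lemma mul_mem_one [CommSemiring R] [Semiring A] [Algebra R A] {a b : A}
    (ha : a ∈ (1 : Submodule R A)) (hb : b ∈ (1 : Submodule R A)) :
    a * b ∈ (1 : Submodule R A) := by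
  simpa only [one_mul] using Submodule.mul_mem_mul ha hb

lemma mem_one_of_smul_mem_one_of_sq_mem_one [CommRing R] [IsDomain R] [IsIntegrallyClosed R]
    [CommRing A] [IsDomain A] [Algebra R A] [FaithfulSMul R A] {k : R} (hk : k ≠ 0) {a : A}
    (hka : k • a ∈ (1 : Submodule R A)) (ha : a ^ 2 ∈ (1 : Submodule R A)) :
    a ∈ (1 : Submodule R A) := by
  obtain ⟨m, hm⟩ := Submodule.mem_one.mp hka
  obtain ⟨n, hn⟩ := Submodule.mem_one.mp ha
  have m_sq : m ^ 2 = k ^ 2 * n := by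
    apply FaithfulSMul.algebraMap_injective R A
    rw [map_pow, map_mul, map_pow, hm, hn, Algebra.smul_def, mul_pow]
  obtain ⟨l, rfl⟩ := (IsIntegrallyClosed.pow_dvd_pow_iff two_ne_zero).mp ⟨n, m_sq⟩
  have hk' : algebraMap R A k ≠ 0 := by simpa using hk
  refine Submodule.mem_one.mpr ⟨l, mul_left_cancel₀ hk' ?_⟩
  rw [← map_mul, hm, Algebra.smul_def]

end MemOne

section UnitGram

open LinearMap (BilinForm)

variable {ι R V : Type*} [Fintype ι] [CommRing R] [AddCommGroup V] [Module R V]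
  {B : BilinForm R V} {e : ι → V}

lemma apply_sum_smul_of_gram (hself : ∀ i, B (e i) (e i) = 2)
    (hpair : Pairwise fun i j ↦ B (e i) (e j) = 1) (c : ι → R) (i : ι) :
    B (e i) (∑ j, c j • e j) = c i + ∑ j, c j := by
  classical
  have gram_eq (j : ι) : B (e i) (e j) = (if i = j then 1 else 0) + 1 := by
    split_ifs with hij
    · rw [← hij, hself, one_add_one_eq_two]
    · rw [hpair hij, zero_add]
  simp [gram_eq, mul_add, Finset.sum_add_distrib]

lemma sum_apply_sum_smul_of_gram (hself : ∀ i, B (e i) (e i) = 2)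
    (hpair : Pairwise fun i j ↦ B (e i) (e j) = 1) (c : ι → R) :
    ∑ i, B (e i) (∑ j, c j • e j) = (Fintype.card ι + 1) * ∑ j, c j := by
  simp only [apply_sum_smul_of_gram hself hpair, Finset.sum_add_distrib, Finset.sum_const,
    Finset.card_univ, nsmul_eq_mul]
  ring

lemma linearIndependent_of_gram [IsDomain R] (hself : ∀ i, B (e i) (e i) = 2)
    (hpair : Pairwise fun i j ↦ B (e i) (e j) = 1) (hcard : (Fintype.card ι + 1 : R) ≠ 0) :
    LinearIndependent R e := by
  refine Fintype.linearIndependent_iff.mpr fun c hc i ↦ ?_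
  have sum_eq_zero : ∑ j, c j = 0 := by
    have := sum_apply_sum_smul_of_gram hself hpair c
    simpa [hc, hcard] using this.symm
  simpa [hc, sum_eq_zero] using (apply_sum_smul_of_gram hself hpair c i).symm

lemma sq_apply_add_apply_self_of_gram [IsDomain R] (hself : ∀ i, B (e i) (e i) = 2)
    (hpair : Pairwise fun i j ↦ B (e i) (e j) = 1) {k : R} (hk : k ≠ 0)
    (hcard : k ^ 2 = Fintype.card ι + 1) {t x : V} (ht : k • t = ∑ i, e i)
    (hx : x ∈ Submodule.span R (Set.range e)) :
    B t x ^ 2 + B x x = ∑ i, B (e i) x ^ 2 := by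
  obtain ⟨c, hc⟩ := (Submodule.mem_span_range_iff_exists_fun R).mp hx
  set S := ∑ i, c i with hS
  have apply_e (i : ι) : B (e i) x = c i + S := by
    rw [← hc, apply_sum_smul_of_gram hself hpair]
  have apply_t : B t x = k * S := by
    refine mul_left_cancel₀ hk ?_
    calc k * B t x = B (k • t) x := by simp
      _ = ∑ i, B (e i) x := by simp [ht]
      _ = k ^ 2 * S := by rw [hcard, ← hc, sum_apply_sum_smul_of_gram hself hpair]
      _ = k * (k * S) := by ring
  have apply_x : B x x = ∑ i, c i ^ 2 + S ^ 2 := by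
    calc B x x = B (∑ i, c i • e i) x := by rw [hc]
      _ = ∑ i, c i * B (e i) x := by simp
      _ = ∑ i, c i ^ 2 + S ^ 2 := by
          simp only [apply_e, mul_add, Finset.sum_add_distrib, ← Finset.sum_mul, sq, hS]
  calc B t x ^ 2 + B x x = ∑ i, c i ^ 2 + 2 * S * S + (k ^ 2 - 1) * S ^ 2 := by
        rw [apply_t, apply_x]
        ring
    _ = ∑ i, (c i ^ 2 + 2 * S * c i + S ^ 2) := by
        simp [hcard, Finset.sum_add_distrib, Finset.mul_sum, hS]
    _ = ∑ i, B (e i) x ^ 2 := by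
        refine Finset.sum_congr rfl fun i _ ↦ ?_
        rw [apply_e]
        ring

end UnitGram

section DualSubmodule

open LinearMap (BilinForm)

variable {ι R K V : Type*} [Fintype ι] [CommRing R] [IsDomain R] [IsIntegrallyClosed R] [Field K]
  [Algebra R K] [FaithfulSMul R K] [AddCommGroup V] [Module K V] [Module R V]
  [IsScalarTower R K V] {B : BilinForm K V} {e : ι → V}

theorem mem_dualSubmodule_of_smul_eq_sum_of_gram {L : Submodule R V}
    (hL : ∀ x ∈ L, B x x ∈ (1 : Submodule R K))
    (hspan : ∀ x ∈ L, x ∈ Submodule.span K (Set.range e))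
    (he : ∀ i, e i ∈ B.dualSubmodule L) (hself : ∀ i, B (e i) (e i) = 2)
    (hpair : Pairwise fun i j ↦ B (e i) (e j) = 1)
    {k : R} (hk : k ≠ 0) (hcard : k ^ 2 = Fintype.card ι + 1) {t : V} (ht : k • t = ∑ i, e i) :
    t ∈ B.dualSubmodule L := by
  intro x hx
  have hk' : algebraMap R K k ≠ 0 := by simpa using hk
  have hcard' : algebraMap R K k ^ 2 = Fintype.card ι + 1 := by
    simpa using congrArg (algebraMap R K) hcard
  have sq_add : B t x ^ 2 + B x x = ∑ i, B (e i) x ^ 2 :=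
    sq_apply_add_apply_self_of_gram hself hpair hk' hcard' (by rwa [algebraMap_smul])
      (hspan x hx)
  refine mem_one_of_smul_mem_one_of_sq_mem_one hk ?_ ?_
  · have smul_apply : k • B t x = ∑ i, B (e i) x := by
      rw [← algebraMap_smul K k t] at ht
      simpa [Algebra.smul_def] using congrArg (B · x) ht
    exact smul_apply ▸ sum_mem fun i _ ↦ he i x hx
  · rw [eq_sub_of_add_eq sq_add]
    refine sub_mem (sum_mem fun i _ ↦ ?_) (hL x hx)
    exact sq (B (e i) x) ▸ mul_mem_one (he i x hx) (he i x hx)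

end DualSubmodule

section E8Lattice

open Matrix

-- The three conditions say that `a` pairs integrally with `2ε₀`, the `εᵢ - ε₀` and `(½, …, ½)`;
-- in this form they are additive in `a`.
lemma inLambda_iff_mem_one {a : Fin 8 → ℝ} :
    inLambda a ↔ a 0 * 2 ∈ (1 : Submodule ℤ ℝ) ∧ (∀ i, a i - a 0 ∈ (1 : Submodule ℤ ℝ)) ∧
      (∑ i, a i) / 2 ∈ (1 : Submodule ℤ ℝ) := by
  simp only [Submodule.mem_one, algebraMap_int_eq, eq_intCast]
  constructor
  · rintro ⟨ha | ha, s, hs⟩ <;> choose n hn using ha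
    · exact ⟨⟨n 0 * 2, by simp [hn]⟩, fun i ↦ ⟨n i - n 0, by simp [hn]⟩, s, by simp [hs]⟩
    · refine ⟨⟨n 0 * 2 + 1, ?_⟩, fun i ↦ ⟨n i - n 0, by simp [hn]⟩, s, by simp [hs]⟩
      simp [hn, add_mul]
  · rintro ⟨⟨m, hm⟩, hsub, s, hs⟩
    choose d hd using hsub
    refine ⟨?_, s, by linarith⟩
    obtain ⟨n, rfl | rfl⟩ := m.even_or_odd'
    · refine .inl fun i ↦ ⟨d i + n, ?_⟩
      push_cast at hm ⊢
      linarith [hd i]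
    · refine .inr fun i ↦ ⟨d i + n, ?_⟩
      push_cast at hm ⊢
      linarith [hd i]

/-- The E8 lattice `Λ` as a `ℤ`-submodule of `ℝ^8`. -/
def e8Lattice : Submodule ℤ (Fin 8 → ℝ) where
  carrier := {a | inLambda a}
  zero_mem' := by simp [inLambda_iff_mem_one]
  add_mem' {a b} ha hb := by
    obtain ⟨ha₀, ha, ha_sum⟩ := inLambda_iff_mem_one.mp ha
    obtain ⟨hb₀, hb, hb_sum⟩ := inLambda_iff_mem_one.mp hb
    refine inLambda_iff_mem_one.mpr ?_
    simp only [Pi.add_apply, add_mul, add_sub_add_comm, Finset.sum_add_distrib, add_div]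
    exact ⟨add_mem ha₀ hb₀, fun i ↦ add_mem (ha i) (hb i), add_mem ha_sum hb_sum⟩
  smul_mem' n a ha := by
    obtain ⟨ha₀, ha, ha_sum⟩ := inLambda_iff_mem_one.mp ha
    refine inLambda_iff_mem_one.mpr ?_
    simp only [Pi.smul_apply, smul_mul_assoc, ← smul_sub, ← Finset.smul_sum, smul_div_assoc]
    exact ⟨Submodule.smul_mem _ n ha₀, fun i ↦ Submodule.smul_mem _ n (ha i),
      Submodule.smul_mem _ n ha_sum⟩

lemma mem_e8Lattice {a : Fin 8 → ℝ} : a ∈ e8Lattice ↔ inLambda a := Iff.rfl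

lemma dotProduct_mem_one_of_mem_e8Lattice {a b : Fin 8 → ℝ} (ha : a ∈ e8Lattice)
    (hb : b ∈ e8Lattice) : a ⬝ᵥ b ∈ (1 : Submodule ℤ ℝ) := by
  obtain ⟨ha₀, ha, ha_sum⟩ := inLambda_iff_mem_one.mp ha
  obtain ⟨hb₀, hb, hb_sum⟩ := inLambda_iff_mem_one.mp hb
  have dotProduct_eq : a ⬝ᵥ b = ∑ i, (a i - a 0) * (b i - b 0) + a 0 * 2 * ((∑ i, b i) / 2) +
      b 0 * 2 * ((∑ i, a i) / 2) - (2 : ℤ) • (a 0 * 2 * (b 0 * 2)) := by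
    simp only [dotProduct, Fin.sum_univ_eight, zsmul_eq_mul]
    push_cast
    ring
  rw [dotProduct_eq]
  exact sub_mem (add_mem (add_mem (sum_mem fun i _ ↦ mul_mem_one (ha i) (hb i))
    (mul_mem_one ha₀ hb_sum)) (mul_mem_one hb₀ ha_sum))
    (Submodule.smul_mem _ 2 (mul_mem_one ha₀ hb₀))

lemma single_zero_two_mem_e8Lattice : Pi.single 0 2 ∈ e8Lattice := by
  refine ⟨.inl fun i ↦ ⟨Pi.single (M := fun _ ↦ ℤ) 0 2 i, ?_⟩, 1, by simp⟩
  simp [Pi.single_apply]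

lemma single_sub_single_mem_e8Lattice (i j : Fin 8) :
    Pi.single i 1 - Pi.single j 1 ∈ e8Lattice := by
  refine ⟨.inl fun l ↦ ⟨(Pi.single i 1 - Pi.single j 1 : Fin 8 → ℤ) l, ?_⟩, 0, by simp⟩
  simp [Pi.single_apply]

lemma const_half_mem_e8Lattice : (fun _ ↦ 2⁻¹) ∈ e8Lattice :=
  ⟨.inr fun _ ↦ ⟨0, by norm_num⟩, 2, by norm_num⟩

theorem dualSubmodule_e8Lattice :
    LinearMap.BilinForm.dualSubmodule (dotProductBilin ℝ ℝ) e8Lattice = e8Lattice := by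
  refine le_antisymm (fun a ha ↦ inLambda_iff_mem_one.mpr ⟨?_, fun i ↦ ?_, ?_⟩)
    fun a ha b hb ↦ dotProduct_mem_one_of_mem_e8Lattice ha hb
  · simpa using ha _ single_zero_two_mem_e8Lattice
  · simpa [dotProduct_sub] using ha _ (single_sub_single_mem_e8Lattice i 0)
  · simpa [dotProduct, ← Finset.sum_mul, div_eq_mul_inv] using ha _ const_half_mem_e8Lattice

end E8Lattice

/-- If `e₁, …, e₈` are roots with pairwise dot products 1, then
`(1/3)(e₁ + ⋯ + e₈)` lies in the lattice Λ. -/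
theorem stmt_4 (e : Fin 8 → (Fin 8 → ℝ))
    (hroot : ∀ i, isRoot (e i))
    (hdot : ∀ i j, i ≠ j → dot (e i) (e j) = 1) :
    inLambda ((1 / 3 : ℝ) • ∑ i, e i) := by
  have he (i : Fin 8) :
      e i ∈ LinearMap.BilinForm.dualSubmodule (dotProductBilin ℝ ℝ) e8Lattice := by
    rw [dualSubmodule_e8Lattice]
    exact (hroot i).1
  have hself (i : Fin 8) : dotProductBilin ℝ ℝ (e i) (e i) = 2 := (hroot i).2
  have hpair : Pairwise fun i j ↦ dotProductBilin ℝ ℝ (e i) (e j) = 1 := fun i j ↦ hdot i j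
  have span_eq_top : Submodule.span ℝ (Set.range e) = ⊤ :=
    (linearIndependent_of_gram hself hpair (by norm_num)).span_eq_top_of_card_eq_finrank (by simp)
  have three_smul : (3 : ℤ) • (1 / 3 : ℝ) • ∑ i, e i = ∑ i, e i := by
    rw [← Int.cast_smul_eq_zsmul ℝ, smul_smul]
    norm_num
  rw [← mem_e8Lattice, ← dualSubmodule_e8Lattice]
  exact mem_dualSubmodule_of_smul_eq_sum_of_gram
    (fun _ hx ↦ dotProduct_mem_one_of_mem_e8Lattice hx hx)
    (fun _ _ ↦ span_eq_top ▸ Submodule.mem_top) he hself hpair three_ne_zero (by norm_num)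
    three_smul
end
end

section
/- Let B = {(e1,e2,e3) ∈ E³ : e1·e2 = 0, e2·e3 = 0, e1·e3 = 1}. Then B has exactly 967680 elements, the Weyl group W acts transitively on B, and for every (e1,e2,e3) ∈ B there are exactly 6 roots e ∈ E with e·e1 = e·e2 = e·e3 = 1. -/
noncomputable section

/-!
Choose `e₃`, then `e₂`, then `e₁`. The stabilizer of `e₃` in `W` contains the reflections of the
root system `E7` orthogonal to `e₃`, and the stabilizer of `(e₃, e₂)` those of the `D6` orthogonal
to both. At each of the three steps the admissible roots contain exactly one vector which is
dominant for the respective root system `E8`, `E7`, `D6`. A root of maximal height in its orbit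
is dominant, since reflecting in a simple root `s` with `s · x < 0` raises the height of `x`. So the
admissible roots always form a single orbit, which gives transitivity, and then counting them for
the dominant representatives alone gives `967680 = 240 * 126 * 32` and the number `6`.
The finitely many remaining verifications are carried out in the integral coordinates of `2Λ`.
-/

open Matrix MulAction

/-! ### Doubled coordinates -/

/-- The lattice `2Λ` in integer coordinates: vectors whose coordinates share one parity and have
sum divisible by 4. -/
def doubledLattice : AddSubgroup (Fin 8 → ℤ) where
  carrier := {z | (∀ i j, 2 ∣ z i - z j) ∧ 4 ∣ ∑ i, z i}
  zero_mem' := by simp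
  add_mem' := by
    rintro z w ⟨hz, hz'⟩ ⟨hw, hw'⟩
    refine ⟨fun i j => ?_, ?_⟩
    · simpa only [Pi.add_apply, add_sub_add_comm] using dvd_add (hz i j) (hw i j)
    · simpa only [Pi.add_apply, Finset.sum_add_distrib] using dvd_add hz' hw'
  neg_mem' := by
    rintro z ⟨hz, hz'⟩
    refine ⟨fun i j => ?_, ?_⟩
    · simpa only [Pi.neg_apply, neg_sub_neg] using hz j i
    · simpa only [Pi.neg_apply, Finset.sum_neg_distrib, dvd_neg] using hz'

theorem mem_doubledLattice {z : Fin 8 → ℤ} :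
    z ∈ doubledLattice ↔ (∀ i j, 2 ∣ z i - z j) ∧ 4 ∣ ∑ i, z i := Iff.rfl

theorem four_dvd_dotProduct {z w : Fin 8 → ℤ} (hz : z ∈ doubledLattice)
    (hw : w ∈ doubledLattice) : 4 ∣ z ⬝ᵥ w := by
  -- All coordinates of `z` and `w` become even once `z 0` and `w 0` are subtracted.
  have shifted : 4 ∣ ∑ i, (z i - z 0) * (w i - w 0) :=
    Finset.dvd_sum fun i _ => mul_dvd_mul (hz.1 i 0) (hw.1 i 0)
  have expand : z ⬝ᵥ w = ∑ i, (z i - z 0) * (w i - w 0) + w 0 * ∑ i, z i + z 0 * ∑ i, w i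
      - 4 * (2 * (z 0 * w 0)) := by
    simp only [dotProduct, Fin.sum_univ_eight]
    ring
  rw [expand]
  exact dvd_sub (dvd_add (dvd_add shifted (hz.2.mul_left _)) (hw.2.mul_left _))
    (dvd_mul_right _ _)

/-- Halving of doubled coordinates, which identifies `doubledLattice` with `Λ`. -/
def half : (Fin 8 → ℤ) →+ (Fin 8 → ℝ) where
  toFun z i := z i / 2
  map_zero' := by ext; simp
  map_add' z w := by ext; simp [add_div]

theorem half_apply (z : Fin 8 → ℤ) (i : Fin 8) : half z i = z i / 2 := rfl

theorem half_injective : Function.Injective half := fun z w h => by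
  ext i
  simpa [half_apply] using congrFun h i

theorem dot_half (z w : Fin 8 → ℤ) : dot (half z) (half w) = (z ⬝ᵥ w : ℤ) / 4 := by
  simp only [dot, half_apply, dotProduct, Int.cast_sum, Int.cast_mul, Finset.sum_div]
  exact Finset.sum_congr rfl fun i _ => by ring

theorem sum_half (z : Fin 8 → ℤ) : ∑ i, half z i = (∑ i, z i : ℤ) / 2 := by
  simp [half_apply, Finset.sum_div]

theorem inLambda_half {z : Fin 8 → ℤ} (hz : z ∈ doubledLattice) : inLambda (half z) := by
  obtain ⟨m, hm⟩ := hz.2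
  refine ⟨?_, m, by rw [sum_half, hm]; push_cast; ring⟩
  rcases Int.even_or_odd' (z 0) with ⟨a, ha | ha⟩
  · refine Or.inl fun i => ?_
    obtain ⟨c, hc⟩ := hz.1 i 0
    exact ⟨a + c, by rw [half_apply, show z i = 2 * (a + c) by lia]; push_cast; ring⟩
  · refine Or.inr fun i => ?_
    obtain ⟨c, hc⟩ := hz.1 i 0
    exact ⟨a + c, by rw [half_apply, show z i = 2 * (a + c) + 1 by lia]; push_cast; ring⟩

theorem exists_half_eq_of_inLambda {a : Fin 8 → ℝ} (ha : inLambda a) :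
    ∃ z ∈ doubledLattice, half z = a := by
  obtain ⟨hcoord, m, hm⟩ := ha
  obtain ⟨z, hz, rfl⟩ : ∃ z : Fin 8 → ℤ, (∀ i j, 2 ∣ z i - z j) ∧ half z = a := by
    rcases hcoord with h | h <;> choose y hy using h
    · exact ⟨fun i => 2 * y i, fun i j => by lia, by ext i; simp [half_apply, hy]⟩
    · exact ⟨fun i => 2 * y i + 1, fun i j => by lia,
        by ext i; simp only [half_apply, hy]; push_cast; ring⟩
  refine ⟨z, ⟨hz, m, ?_⟩, rfl⟩
  rw [sum_half] at hm
  exact_mod_cast (by linarith : ((∑ i, z i : ℤ) : ℝ) = 4 * m)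

/-! ### Enumeration of the roots -/

/-- The integer vectors with entries in `S` and sum of squares `b`. Discarding entries `x` with
`b < x ^ 2` keeps the enumeration small enough to be evaluated by the kernel. -/
def vectorsOfSqNorm (S : Finset ℤ) : (n : ℕ) → ℤ → Finset (Fin n → ℤ)
  | 0, b => if b = 0 then {![]} else ∅
  | n + 1, b => ((S.filter fun x => x * x ≤ b).sigma fun x => vectorsOfSqNorm S n (b - x * x)).map
      ((Equiv.sigmaEquivProd ℤ (Fin n → ℤ)).trans (Fin.consEquiv fun _ => ℤ)).toEmbedding

theorem mem_vectorsOfSqNorm {S : Finset ℤ} {n : ℕ} {b : ℤ} {z : Fin n → ℤ} :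
    z ∈ vectorsOfSqNorm S n b ↔ (∀ i, z i ∈ S) ∧ z ⬝ᵥ z = b := by
  induction n generalizing b with
  | zero =>
    simp only [vectorsOfSqNorm, Subsingleton.elim z ![], dotProduct_of_isEmpty]
    split_ifs <;> simp_all [eq_comm]
  | succ n ih =>
    cases z using Fin.consCases with | _ x y
    have : 0 ≤ y ⬝ᵥ y := Finset.sum_nonneg fun i _ => mul_self_nonneg (y i)
    have key : (Fin.cons x y : Fin (n + 1) → ℤ) ⬝ᵥ Fin.cons x y = x * x + y ⬝ᵥ y :=
      cons_dotProduct_cons x y x y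
    simp only [vectorsOfSqNorm, Finset.mem_map_equiv, Finset.mem_sigma, Finset.mem_filter, ih,
      Fin.forall_fin_succ, key, Fin.cons_zero, Fin.cons_succ]
    change ((x ∈ S ∧ x * x ≤ b) ∧ (∀ i, y i ∈ S) ∧ y ⬝ᵥ y = b - x * x) ↔ _
    grind

/-- The E8 roots in doubled coordinates: first the integral ones, then the half-integral ones,
listed so that the kernel can evaluate this set. -/
def doubledRoots : Finset (Fin 8 → ℤ) :=
  ((vectorsOfSqNorm {-2, 0, 2} 8 8).disjUnion (vectorsOfSqNorm {-1, 1} 8 8) <|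
    Finset.disjoint_left.2 fun z hz hz' => by
      have h₀ := (mem_vectorsOfSqNorm.1 hz).1 0
      have h₁ := (mem_vectorsOfSqNorm.1 hz').1 0
      simp only [Finset.mem_insert, Finset.mem_singleton] at h₀ h₁
      lia).filter fun z => 4 ∣ ∑ i, z i

theorem mem_doubledRoots {z : Fin 8 → ℤ} :
    z ∈ doubledRoots ↔ z ∈ doubledLattice ∧ z ⬝ᵥ z = 8 := by
  simp only [doubledRoots, Finset.mem_filter, Finset.mem_disjUnion, mem_vectorsOfSqNorm,
    Finset.mem_insert, Finset.mem_singleton, mem_doubledLattice]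
  constructor
  · rintro ⟨⟨h, hnorm⟩ | ⟨h, hnorm⟩, hsum⟩
    all_goals
      refine ⟨⟨fun i j => ?_, hsum⟩, hnorm⟩
      have := h i
      have := h j
      lia
  · rintro ⟨⟨hparity, hsum⟩, hnorm⟩
    have hle (i) : z i * z i ≤ 8 :=
      hnorm ▸ Finset.single_le_sum (f := fun i => z i * z i)
        (fun j _ => mul_self_nonneg (z j)) (Finset.mem_univ i)
    have hlower (i) : -2 ≤ z i := by nlinarith [hle i]
    have hupper (i) : z i ≤ 2 := by nlinarith [hle i]
    refine ⟨?_, hsum⟩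
    rcases Int.even_or_odd' (z 0) with ⟨a, ha | ha⟩
    · refine Or.inl ⟨fun i => ?_, hnorm⟩
      have := hparity i 0
      have := hlower i
      have := hupper i
      lia
    · refine Or.inr ⟨fun i => ?_, hnorm⟩
      have := hparity i 0
      have := hlower i
      have := hupper i
      lia

theorem isRoot_half {z : Fin 8 → ℤ} (hz : z ∈ doubledRoots) : isRoot (half z) := by
  obtain ⟨hlat, hnorm⟩ := mem_doubledRoots.1 hz
  exact ⟨inLambda_half hlat, by rw [dot_half, hnorm]; norm_num⟩

theorem exists_half_eq_of_isRoot {a : Fin 8 → ℝ} (ha : isRoot a) :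
    ∃ z ∈ doubledRoots, half z = a := by
  obtain ⟨z, hz, rfl⟩ := exists_half_eq_of_inLambda ha.1
  have hnorm : ((z ⬝ᵥ z : ℤ) : ℝ) = 8 := by linarith [dot_half z z, ha.2]
  exact ⟨z, mem_doubledRoots.2 ⟨hz, mod_cast hnorm⟩, rfl⟩

/-! ### The Weyl group -/

theorem dot_eq_dotProduct (a b : Fin 8 → ℝ) : dot a b = a ⬝ᵥ b := rfl

theorem dot_comm (a b : Fin 8 → ℝ) : dot a b = dot b a := dotProduct_comm a b

/-- The reflection in the hyperplane orthogonal to a vector of squared norm 2. -/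
def weylReflection {s : Fin 8 → ℝ} (hs : dot s s = 2) : (Fin 8 → ℝ) ≃ₗ[ℝ] (Fin 8 → ℝ) :=
  Module.reflection (f := dotProductBilin ℝ ℝ s) hs

section weylReflection

variable {s : Fin 8 → ℝ}

theorem weylReflection_apply (hs : dot s s = 2) (x : Fin 8 → ℝ) :
    weylReflection hs x = x - dot s x • s := rfl

theorem weylReflection_apply_of_dot_eq_zero (hs : dot s s = 2) {x : Fin 8 → ℝ}
    (hx : dot s x = 0) : weylReflection hs x = x := by
  rw [weylReflection_apply, hx, zero_smul, sub_zero]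

theorem dot_weylReflection_left (hs : dot s s = 2) (x y : Fin 8 → ℝ) :
    dot (weylReflection hs x) y = dot x y - dot s x * dot s y := by
  simp only [weylReflection_apply, dot_eq_dotProduct, sub_dotProduct, smul_dotProduct, smul_eq_mul]

theorem dot_weylReflection_weylReflection (hs : dot s s = 2) (x y : Fin 8 → ℝ) :
    dot (weylReflection hs x) (weylReflection hs y) = dot x y := by
  rw [dot_weylReflection_left, dot_comm x, dot_comm s (weylReflection hs y),
    dot_weylReflection_left, dot_weylReflection_left, hs, dot_comm y x, dot_comm y s]
  ring

theorem inLambda_weylReflection (hs : isRoot s) {x : Fin 8 → ℝ} (hx : inLambda x) :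
    inLambda (weylReflection hs.2 x) := by
  obtain ⟨w, hw, rfl⟩ := exists_half_eq_of_inLambda hs.1
  obtain ⟨z, hz, rfl⟩ := exists_half_eq_of_inLambda hx
  obtain ⟨k, hk⟩ := four_dvd_dotProduct hw hz
  have reflection_eq : weylReflection hs.2 (half z) = half (z - k • w) := by
    rw [weylReflection_apply, dot_half, hk, map_sub, map_zsmul, ← Int.cast_smul_eq_zsmul ℝ]
    norm_num
  rw [reflection_eq]
  exact inLambda_half (sub_mem hz (zsmul_mem hw k))

theorem isRoot_weylReflection (hs : isRoot s) {x : Fin 8 → ℝ} (hx : isRoot x) :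
    isRoot (weylReflection hs.2 x) :=
  ⟨inLambda_weylReflection hs hx.1, by rw [dot_weylReflection_weylReflection, hx.2]⟩

theorem isWeyl_weylReflection (hs : isRoot s) : IsWeyl (weylReflection hs.2) :=
  ⟨dot_weylReflection_weylReflection hs.2,
    (Module.bijOn_reflection_of_mapsTo (Φ := {x | isRoot x}) hs.2 fun _ =>
      isRoot_weylReflection hs).image_eq⟩

end weylReflection

/-- The Weyl group `W`, as a subgroup of the general linear group. -/
def weylGroup : Subgroup ((Fin 8 → ℝ) ≃ₗ[ℝ] (Fin 8 → ℝ)) where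
  carrier := {w | IsWeyl w}
  one_mem' := ⟨fun _ _ => rfl, Set.image_id _⟩
  mul_mem' := by
    rintro v w ⟨hv, hv'⟩ ⟨hw, hw'⟩
    refine ⟨fun a b => (hv _ _).trans (hw a b), ?_⟩
    rw [show ⇑(v * w) = v ∘ w from rfl, Set.image_comp, hw', hv']
  inv_mem' := by
    rintro w ⟨hw, hw'⟩
    refine ⟨fun a b => by rw [← hw]; simp, ?_⟩
    nth_rw 1 [← hw']
    simp [← Set.image_comp]

theorem dot_smul_smul (w : weylGroup) (a b : Fin 8 → ℝ) : dot (w • a) (w • b) = dot a b :=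
  w.2.1 a b

theorem isRoot_smul_iff (w : weylGroup) {a : Fin 8 → ℝ} : isRoot (w • a) ↔ isRoot a := by
  change w.1 a ∈ {x | isRoot x} ↔ a ∈ {x | isRoot x}
  nth_rw 1 [← w.2.2]
  exact w.1.injective.mem_set_image

/-! ### Roots with prescribed inner products -/

/-- The roots whose inner product with `g i` is `k i` for every `i`. -/
def rootsWithProducts {ι : Type*} (g : ι → Fin 8 → ℝ) (k : ι → ℤ) : Set (Fin 8 → ℝ) :=
  {x | isRoot x ∧ ∀ i, dot x (g i) = k i}

/-- The counterpart of `rootsWithProducts` in doubled coordinates. -/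
def doubledRootsWithProducts {ι : Type*} [Fintype ι] (f : ι → Fin 8 → ℤ) (k : ι → ℤ) :
    Finset (Fin 8 → ℤ) :=
  doubledRoots.filter fun z => ∀ i, z ⬝ᵥ f i = 4 * k i

theorem rootsWithProducts_half {ι : Type*} [Fintype ι] (f : ι → Fin 8 → ℤ) (k : ι → ℤ) :
    rootsWithProducts (half ∘ f) k = half '' doubledRootsWithProducts f k := by
  have dot_eq_iff (z i) : dot (half z) (half (f i)) = k i ↔ z ⬝ᵥ f i = 4 * k i := by
    rw [dot_half, div_eq_iff four_ne_zero, mul_comm]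
    norm_cast
  ext x
  simp only [rootsWithProducts, doubledRootsWithProducts, Set.mem_image, SetLike.mem_coe,
    Finset.mem_filter, Set.mem_ofPred_eq, Function.comp_apply]
  constructor
  · rintro ⟨hx, hdot⟩
    obtain ⟨z, hz, rfl⟩ := exists_half_eq_of_isRoot hx
    exact ⟨z, ⟨hz, fun i => (dot_eq_iff z i).1 (hdot i)⟩, rfl⟩
  · rintro ⟨z, ⟨hz, hdot⟩, rfl⟩
    exact ⟨isRoot_half hz, fun i => (dot_eq_iff z i).2 (hdot i)⟩

theorem finite_setOf_isRoot : {x | isRoot x}.Finite :=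
  (doubledRoots.finite_toSet.image half).subset fun _ hx => exists_half_eq_of_isRoot hx

theorem finite_rootsWithProducts {ι : Type*} (g : ι → Fin 8 → ℝ) (k : ι → ℤ) :
    (rootsWithProducts g k).Finite :=
  finite_setOf_isRoot.subset fun _ hx => hx.1

theorem smul_mem_rootsWithProducts_smul_iff {ι : Type*} (w : weylGroup) {g : ι → Fin 8 → ℝ}
    {k : ι → ℤ} {x : Fin 8 → ℝ} :
    w • x ∈ rootsWithProducts (w • g) k ↔ x ∈ rootsWithProducts g k := by
  simp only [rootsWithProducts, Set.mem_ofPred_eq, isRoot_smul_iff, Pi.smul_apply, dot_smul_smul]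

open scoped Pointwise in
theorem ncard_rootsWithProducts_of_mem_orbit {ι : Type*} {e g : ι → Fin 8 → ℝ} (k : ι → ℤ)
    (he : e ∈ orbit weylGroup g) :
    (rootsWithProducts e k).ncard = (rootsWithProducts g k).ncard := by
  obtain ⟨w, rfl⟩ := he
  have : rootsWithProducts (w • g) k = w • rootsWithProducts g k := by
    ext x
    rw [Set.mem_smul_set_iff_inv_smul_mem, ← smul_mem_rootsWithProducts_smul_iff w (g := g),
      smul_inv_smul]
  rw [this, Set.ncard_smul_set]

theorem ncard_rootsWithProducts {ι : Type*} [Fintype ι] {e : ι → Fin 8 → ℝ} {f : ι → Fin 8 → ℤ}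
    (k : ι → ℤ) (he : e ∈ orbit weylGroup (half ∘ f)) :
    (rootsWithProducts e k).ncard = (doubledRootsWithProducts f k).card := by
  rw [ncard_rootsWithProducts_of_mem_orbit k he, rootsWithProducts_half,
    Set.ncard_image_of_injective _ half_injective, Set.ncard_coe_finset]

/-! ### Dominant roots -/

/-- Reflecting in members of `Δ` increases the height `dot · ρ` until a dominant root is reached,
and these reflections fix every `g i`. -/
theorem vecCons_mem_orbit_of_dominant_unique {n : ℕ} {g : Fin n → Fin 8 → ℝ} {k : Fin n → ℤ}
    {Δ : Set (Fin 8 → ℝ)} {ρ b x : Fin 8 → ℝ} (hroot : ∀ s ∈ Δ, isRoot s)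
    (horth : ∀ s ∈ Δ, ∀ i, dot s (g i) = 0) (hρ : ∀ s ∈ Δ, 0 < dot s ρ)
    (hb : ∀ y ∈ rootsWithProducts g k, (∀ s ∈ Δ, 0 ≤ dot s y) → y = b)
    (hx : x ∈ rootsWithProducts g k) :
    vecCons x g ∈ orbit weylGroup (vecCons b g) := by
  let conjugates := {y ∈ rootsWithProducts g k | vecCons y g ∈ orbit weylGroup (vecCons x g)}
  obtain ⟨y, ⟨hy, hyx⟩, hmax⟩ := Set.exists_max_image conjugates (dot · ρ)
    ((finite_rootsWithProducts g k).subset fun _ h => h.1) ⟨x, hx, mem_orbit_self _⟩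
  suffices hdom : ∀ s ∈ Δ, 0 ≤ dot s y by
    rw [← hb y hy hdom]
    exact mem_orbit_symm.1 hyx
  intro s hs
  by_contra! hneg
  let w : weylGroup := ⟨weylReflection (hroot s hs).2, isWeyl_weylReflection (hroot s hs)⟩
  have hwg : w • g = g :=
    funext fun i => weylReflection_apply_of_dot_eq_zero (hroot s hs).2 (horth s hs i)
  have hwy : w • y ∈ conjugates := by
    constructor
    · simpa only [hwg] using (smul_mem_rootsWithProducts_smul_iff w).2 hy
    · have : w • vecCons y g = vecCons (w • y) g := by rw [smul_cons, hwg]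
      exact this ▸ mem_orbit_of_mem_orbit w hyx
  have hheight : dot (w • y) ρ = dot y ρ - dot s y * dot s ρ :=
    dot_weylReflection_left (hroot s hs).2 y ρ
  have hle : dot (w • y) ρ ≤ dot y ρ := hmax _ hwy
  linarith [mul_neg_of_neg_of_pos hneg (hρ s hs)]

/-- The simple roots of `E8` in doubled coordinates, with Bourbaki's numbering. -/
def simpleRoot : Fin 8 → Fin 8 → ℤ :=
  ![![1, -1, -1, -1, -1, -1, -1, 1],
    ![2, 2, 0, 0, 0, 0, 0, 0],
    ![-2, 2, 0, 0, 0, 0, 0, 0],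
    ![0, -2, 2, 0, 0, 0, 0, 0],
    ![0, 0, -2, 2, 0, 0, 0, 0],
    ![0, 0, 0, -2, 2, 0, 0, 0],
    ![0, 0, 0, 0, -2, 2, 0, 0],
    ![0, 0, 0, 0, 0, -2, 2, 0]]

/-- The half-sum `ρ` of the positive roots of `E8`, in doubled coordinates. -/
def doubledRho : Fin 8 → ℤ := ![0, 2, 4, 6, 8, 10, 12, 46]

theorem simpleRoot_mem_doubledRoots (j : Fin 8) : simpleRoot j ∈ doubledRoots := by
  rw [mem_doubledRoots, mem_doubledLattice]
  decide +revert +kernel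

theorem simpleRoot_dotProduct_doubledRho_pos (j : Fin 8) : 0 < simpleRoot j ⬝ᵥ doubledRho := by
  decide +revert

/-- Nonnegativity of `z` on the simple roots orthogonal to the family `f`, that is, on the simple
roots of the stabilizer of a family `f` lying in the closed fundamental chamber. -/
def IsDominant {n : ℕ} (f : Fin n → Fin 8 → ℤ) (z : Fin 8 → ℤ) : Prop :=
  ∀ j, (∀ i, simpleRoot j ⬝ᵥ f i = 0) → 0 ≤ simpleRoot j ⬝ᵥ z

instance {n : ℕ} (f : Fin n → Fin 8 → ℤ) : DecidablePred (IsDominant f) := fun z => by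
  unfold IsDominant
  infer_instance

theorem vecCons_mem_orbit_half {n : ℕ} {f : Fin n → Fin 8 → ℤ} {k : Fin n → ℤ}
    {b : Fin 8 → ℤ} (hb : ∀ z ∈ doubledRootsWithProducts f k, IsDominant f z → z = b)
    {e : Fin n → Fin 8 → ℝ} (he : e ∈ orbit weylGroup (half ∘ f)) {x : Fin 8 → ℝ}
    (hx : x ∈ rootsWithProducts e k) :
    vecCons x e ∈ orbit weylGroup (half ∘ vecCons b f) := by
  obtain ⟨w, hw : w • e = half ∘ f⟩ := mem_orbit_symm.1 he
  have hwx : w • x ∈ rootsWithProducts (half ∘ f) k :=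
    hw ▸ (smul_mem_rootsWithProducts_smul_iff w).2 hx
  have hcons : half ∘ vecCons b f = vecCons (half b) (half ∘ f) := Fin.comp_cons half b f
  have hmoved : vecCons (w • x) (half ∘ f) ∈ orbit weylGroup (half ∘ vecCons b f) := by
    rw [hcons]
    refine vecCons_mem_orbit_of_dominant_unique (ρ := half doubledRho)
      (Δ := {s | ∃ j, (∀ i, simpleRoot j ⬝ᵥ f i = 0) ∧ half (simpleRoot j) = s}) ?_ ?_ ?_ ?_ hwx
    · rintro _ ⟨j, -, rfl⟩
      exact isRoot_half (simpleRoot_mem_doubledRoots j)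
    · rintro _ ⟨j, horth, rfl⟩ i
      simp [dot_half, horth i]
    · rintro _ ⟨j, -, rfl⟩
      rw [dot_half]
      exact div_pos (mod_cast simpleRoot_dotProduct_doubledRho_pos j) four_pos
    · rw [rootsWithProducts_half]
      rintro _ ⟨z, hz, rfl⟩ hdom
      refine congrArg half (hb z hz fun j horth => ?_)
      have := hdom _ ⟨j, horth, rfl⟩
      rw [dot_half] at this
      exact_mod_cast (by linarith : (0 : ℝ) ≤ (simpleRoot j ⬝ᵥ z : ℤ))
  rw [← hw, ← smul_cons] at hmoved
  simpa only [inv_smul_smul] using mem_orbit_of_mem_orbit w⁻¹ hmoved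

/-- The highest root `e₇ + e₈` of `E8`, in doubled coordinates. -/
def highestRootE8 : Fin 8 → ℤ := ![0, 0, 0, 0, 0, 0, 2, 2]

/-- The highest root `e₈ - e₇` of the `E7` orthogonal to `highestRootE8`, in doubled
coordinates. -/
def highestRootE7 : Fin 8 → ℤ := ![0, 0, 0, 0, 0, 0, -2, 2]

/-- The root which restricts to the highest weight of a half-spin representation of the `D6`
orthogonal to `highestRootE7` and `highestRootE8`, in doubled coordinates. -/
def halfSpinRoot : Fin 8 → ℤ := ![1, 1, 1, 1, 1, 1, 1, 1]

theorem eq_highestRootE8_of_isDominant : ∀ z ∈ doubledRootsWithProducts ![] ![],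
    IsDominant ![] z → z = highestRootE8 := by
  decide +kernel

theorem eq_highestRootE7_of_isDominant : ∀ z ∈ doubledRootsWithProducts ![highestRootE8] ![0],
    IsDominant ![highestRootE8] z → z = highestRootE7 := by
  decide +kernel

theorem eq_halfSpinRoot_of_isDominant :
    ∀ z ∈ doubledRootsWithProducts ![highestRootE7, highestRootE8] ![0, 1],
      IsDominant ![highestRootE7, highestRootE8] z → z = halfSpinRoot := by
  decide +kernel

theorem card_doubledRoots : doubledRoots.card = 240 := by
  decide +kernel

theorem card_doubledRootsWithProducts_highestRootE8 :
    (doubledRootsWithProducts ![highestRootE8] ![0]).card = 126 := by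
  decide +kernel

theorem card_doubledRootsWithProducts_highestRoots :
    (doubledRootsWithProducts ![highestRootE7, highestRootE8] ![0, 1]).card = 32 := by
  decide +kernel

theorem card_doubledRootsWithProducts_halfSpinRoot :
    (doubledRootsWithProducts ![halfSpinRoot, highestRootE7, highestRootE8] ![1, 1, 1]).card =
      6 := by
  decide +kernel

/-! ### Orthogonal pairs and triples -/

theorem ncard_setOf_snd_mem_and_fst_mem {α β : Type*} {T : Set β} {S : β → Set α} {n : ℕ}
    (hT : T.Finite) (hS : ∀ b ∈ T, (S b).Finite) (hcard : ∀ b ∈ T, (S b).ncard = n) :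
    {p : α × β | p.2 ∈ T ∧ p.1 ∈ S p.2}.ncard = T.ncard * n := by
  have eq_biUnion : {p : α × β | p.2 ∈ T ∧ p.1 ∈ S p.2} = ⋃ b ∈ T, (·, b) '' S b := by
    ext ⟨a, b⟩
    simp [and_comm]
  have fiber_ncard (b) (hb : b ∈ T) : ((·, b) '' S b).ncard = n := by
    rw [Set.ncard_image_of_injective _ (Prod.mk_left_injective b), hcard b hb]
  have fibers_disjoint : T.PairwiseDisjoint fun b => (·, b) '' S b := by
    intro b _ b' _ hne
    refine Set.disjoint_left.2 ?_
    rintro _ ⟨a, -, rfl⟩ ⟨a', -, h⟩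
    exact hne (congrArg Prod.snd h).symm
  rw [eq_biUnion, hT.ncard_biUnion (fun b hb => (hS b hb).image _) fibers_disjoint,
    finsum_mem_congr rfl fiber_ncard, finsum_mem_eq_finite_toFinset_sum _ hT, Finset.sum_const,
    ← Set.ncard_eq_toFinset_card T hT, smul_eq_mul]

/-- The pairs `(e₂, e₃)` of orthogonal roots, fibred over `e₃`. -/
def orthogonalPairs : Set ((Fin 8 → ℝ) × (Fin 8 → ℝ)) :=
  {q | isRoot q.2 ∧ q.1 ∈ rootsWithProducts ![q.2] ![0]}

/-- The set `B`, fibred over the pairs `(e₂, e₃)`. -/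
def rootTriples : Set ((Fin 8 → ℝ) × (Fin 8 → ℝ) × (Fin 8 → ℝ)) :=
  {v | v.2 ∈ orthogonalPairs ∧ v.1 ∈ rootsWithProducts ![v.2.1, v.2.2] ![0, 1]}

theorem mem_rootTriples {v : (Fin 8 → ℝ) × (Fin 8 → ℝ) × (Fin 8 → ℝ)} :
    v ∈ rootTriples ↔ isRoot v.1 ∧ isRoot v.2.1 ∧ isRoot v.2.2 ∧
      dot v.1 v.2.1 = 0 ∧ dot v.2.1 v.2.2 = 0 ∧ dot v.1 v.2.2 = 1 := by
  simp only [rootTriples, orthogonalPairs, rootsWithProducts, Set.mem_ofPred_eq,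
    Fin.forall_fin_two, forall_const, cons_val_zero, cons_val_one, cons_val_fin_one,
    Int.cast_zero, Int.cast_one]
  tauto

theorem singleton_mem_orbit {e₃ : Fin 8 → ℝ} (h₃ : isRoot e₃) :
    ![e₃] ∈ orbit weylGroup (half ∘ ![highestRootE8]) :=
  vecCons_mem_orbit_half eq_highestRootE8_of_isDominant
    (by rw [Subsingleton.elim (half ∘ ![]) ![]]; exact mem_orbit_self _) ⟨h₃, finZeroElim⟩

theorem pair_mem_orbit {e₂ e₃ : Fin 8 → ℝ} (h : (e₂, e₃) ∈ orthogonalPairs) :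
    ![e₂, e₃] ∈ orbit weylGroup (half ∘ ![highestRootE7, highestRootE8]) :=
  vecCons_mem_orbit_half eq_highestRootE7_of_isDominant (singleton_mem_orbit h.1) h.2

theorem triple_mem_orbit {e₁ e₂ e₃ : Fin 8 → ℝ} (h : (e₁, e₂, e₃) ∈ rootTriples) :
    ![e₁, e₂, e₃] ∈ orbit weylGroup (half ∘ ![halfSpinRoot, highestRootE7, highestRootE8]) :=
  vecCons_mem_orbit_half eq_halfSpinRoot_of_isDominant (pair_mem_orbit h.1) h.2

theorem ncard_setOf_isRoot : {e | isRoot e}.ncard = 240 := by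
  have : {e | isRoot e} = half '' doubledRoots :=
    Set.Subset.antisymm (fun _ => exists_half_eq_of_isRoot)
      (Set.image_subset_iff.2 fun _ => isRoot_half)
  rw [this, Set.ncard_image_of_injective _ half_injective, Set.ncard_coe_finset,
    card_doubledRoots]

theorem ncard_orthogonalPairs : orthogonalPairs.ncard = 240 * 126 := by
  have fiber_ncard (e₃) (h₃ : isRoot e₃) : (rootsWithProducts ![e₃] ![0]).ncard = 126 := by
    rw [ncard_rootsWithProducts _ (singleton_mem_orbit h₃),
      card_doubledRootsWithProducts_highestRootE8]
  have count : orthogonalPairs.ncard = {e | isRoot e}.ncard * 126 :=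
    ncard_setOf_snd_mem_and_fst_mem (S := fun e₃ => rootsWithProducts ![e₃] ![0])
      finite_setOf_isRoot (fun _ _ => finite_rootsWithProducts _ _) fiber_ncard
  rw [count, ncard_setOf_isRoot]

theorem ncard_rootTriples : rootTriples.ncard = 240 * 126 * 32 := by
  have pairs_finite : orthogonalPairs.Finite :=
    (finite_setOf_isRoot.prod finite_setOf_isRoot).subset fun _ hq => ⟨hq.2.1, hq.1⟩
  have fiber_ncard (q) (hq : q ∈ orthogonalPairs) :
      (rootsWithProducts ![q.1, q.2] ![0, 1]).ncard = 32 := by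
    rw [ncard_rootsWithProducts _ (pair_mem_orbit hq),
      card_doubledRootsWithProducts_highestRoots]
  have count : rootTriples.ncard = orthogonalPairs.ncard * 32 :=
    ncard_setOf_snd_mem_and_fst_mem (T := orthogonalPairs) (n := 32)
      (S := fun q => rootsWithProducts ![q.1, q.2] ![0, 1]) pairs_finite
      (fun _ _ => finite_rootsWithProducts _ _) fiber_ncard
  rw [count, ncard_orthogonalPairs]

theorem exists_isWeyl_of_mem_rootTriples {e₁ e₂ e₃ f₁ f₂ f₃ : Fin 8 → ℝ}
    (he : (e₁, e₂, e₃) ∈ rootTriples) (hf : (f₁, f₂, f₃) ∈ rootTriples) :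
    ∃ w : (Fin 8 → ℝ) ≃ₗ[ℝ] (Fin 8 → ℝ), IsWeyl w ∧ w e₁ = f₁ ∧ w e₂ = f₂ ∧ w e₃ = f₃ := by
  have same_orbit : ![f₁, f₂, f₃] ∈ orbit weylGroup ![e₁, e₂, e₃] := by
    rw [orbit_eq_iff.2 (triple_mem_orbit he)]
    exact triple_mem_orbit hf
  obtain ⟨w, hw⟩ := same_orbit
  exact ⟨w, w.2, congrFun hw 0, congrFun hw 1, congrFun hw 2⟩

theorem ncard_roots_adjacent_to_rootTriple {e₁ e₂ e₃ : Fin 8 → ℝ}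
    (h : (e₁, e₂, e₃) ∈ rootTriples) :
    {e | isRoot e ∧ dot e e₁ = 1 ∧ dot e e₂ = 1 ∧ dot e e₃ = 1}.ncard = 6 := by
  have eq_rootsWithProducts : {e | isRoot e ∧ dot e e₁ = 1 ∧ dot e e₂ = 1 ∧ dot e e₃ = 1} =
      rootsWithProducts ![e₁, e₂, e₃] ![1, 1, 1] := by
    ext e
    simp [rootsWithProducts, Fin.forall_fin_succ]
  rw [eq_rootsWithProducts, ncard_rootsWithProducts ![1, 1, 1] (triple_mem_orbit h),
    card_doubledRootsWithProducts_halfSpinRoot]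

/-- The set `B` of triples of roots `(e1,e2,e3)` with `e1·e2 = 0`,
`e2·e3 = 0`, `e1·e3 = 1` has exactly 967680 elements, the Weyl group acts
transitively on it, and for every element of `B` there are exactly 6 roots having
dot product 1 with all three components. -/
theorem stmt_6 :
    {v : (Fin 8 → ℝ) × (Fin 8 → ℝ) × (Fin 8 → ℝ) |
      isRoot v.1 ∧ isRoot v.2.1 ∧ isRoot v.2.2 ∧
      dot v.1 v.2.1 = 0 ∧ dot v.2.1 v.2.2 = 0 ∧ dot v.1 v.2.2 = 1}.ncard = 967680 ∧
    (∀ e1 e2 e3 f1 f2 f3 : Fin 8 → ℝ,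
      isRoot e1 → isRoot e2 → isRoot e3 → isRoot f1 → isRoot f2 → isRoot f3 →
      dot e1 e2 = 0 → dot e2 e3 = 0 → dot e1 e3 = 1 →
      dot f1 f2 = 0 → dot f2 f3 = 0 → dot f1 f3 = 1 →
      ∃ w : (Fin 8 → ℝ) ≃ₗ[ℝ] (Fin 8 → ℝ),
        IsWeyl w ∧ w e1 = f1 ∧ w e2 = f2 ∧ w e3 = f3) ∧
    (∀ e1 e2 e3 : Fin 8 → ℝ, isRoot e1 → isRoot e2 → isRoot e3 →
      dot e1 e2 = 0 → dot e2 e3 = 0 → dot e1 e3 = 1 →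
      {e | isRoot e ∧ dot e e1 = 1 ∧ dot e e2 = 1 ∧ dot e e3 = 1}.ncard = 6) := by
  refine ⟨?_, ?_, ?_⟩
  · simp only [← mem_rootTriples]
    exact ncard_rootTriples
  · intro e1 e2 e3 f1 f2 f3 he1 he2 he3 hf1 hf2 hf3 he12 he23 he13 hf12 hf23 hf13
    exact exists_isWeyl_of_mem_rootTriples
      (mem_rootTriples.2 ⟨he1, he2, he3, he12, he23, he13⟩)
      (mem_rootTriples.2 ⟨hf1, hf2, hf3, hf12, hf23, hf13⟩)
  · intro e1 e2 e3 h1 h2 h3 h12 h23 h13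
    exact ncard_roots_adjacent_to_rootTriple (mem_rootTriples.2 ⟨h1, h2, h3, h12, h23, h13⟩)
end
end
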